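/- arXiv:1503.00918 — 2 statements merged into one kernel-verified Lean document; each statement's English description precedes it below -/
import Mathlib

section
/- Let (P_i)_{i ∈ I} be a family of cyclically ordered sets of points (each on its own circle), and let Z be the commutative K-algebra with one generator (i; xy) for each index i ∈ I and each ordered pair (x,y) of points of P_i, modulo the relations (i; xx) = 0, generators attached to different indices being distinct. Define a bracket on Z by letting it equal the swapping bracket of P_i on any two generators attached to the same index i, and equal zero on any two generators attached to different indices, extended to Z by Leibniz's rule and antisymmetry. Then this bracket is a Poisson bracket on Z (antisymmetric, a biderivation, and satisfying the Jacobi identity). -/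
noncomputable section

open scoped Classical
open MvPolynomial

set_option maxHeartbeats 1000000
set_option synthInstance.maxHeartbeats 400000

instance fact01 : Fact ((0:ℝ) < 1) := ⟨one_pos⟩

/-- The circle, modelled as `ℝ/ℤ`. -/
abbrev Circle1 : Type := AddCircle (1:ℝ)

/-- The coordinate in `[0,1)` of the point `x` of the circle obtained after removing the
point `o` and identifying the complement of `o` with an interval. -/
def coordAt (o x : Circle1) : ℝ := ((AddCircle.equivIco 1 0) (x - o) : ℝ)

/-- The sign `△` of a real number, as a rational number in `{-1, 0, 1}`. -/
def sgnQ (a : ℝ) : ℚ := if a < 0 then -1 else if a = 0 then 0 else 1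

/-- The linking number `J(rx, sy)` of the chords `rx` and `sy`, computed using the
cut point `o`. -/
def linkingAt (o r x s y : Circle1) : ℚ :=
  (1/2) * (sgnQ (coordAt o r - coordAt o x) * sgnQ (coordAt o r - coordAt o y)
        * sgnQ (coordAt o y - coordAt o x)
      - sgnQ (coordAt o r - coordAt o x) * sgnQ (coordAt o r - coordAt o s)
        * sgnQ (coordAt o s - coordAt o x))

lemma circle1_infinite : Infinite Circle1 := by
  have h : (Set.Ico (0:ℝ) (0+1)).Infinite := Set.Ico_infinite (by norm_num)
  haveI := h.to_subtype
  exact Infinite.of_injective (fun q : Set.Ico (0:ℝ) (0+1) => (AddCircle.equivIco 1 0).symm q)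
    ((AddCircle.equivIco 1 0).symm.injective)

lemma exists_cut (r x s y : Circle1) :
    ∃ o : Circle1, o ≠ r ∧ o ≠ x ∧ o ≠ s ∧ o ≠ y := by
  haveI : Infinite Circle1 := circle1_infinite
  have hfin : ({r, x, s, y} : Set Circle1).Finite :=
    (((Set.finite_singleton y).insert s).insert x).insert r
  obtain ⟨o, ho⟩ := hfin.infinite_compl.nonempty
  simp only [Set.mem_compl_iff, Set.mem_insert_iff, Set.mem_singleton_iff, not_or] at ho
  exact ⟨o, ho.1, ho.2.1, ho.2.2.1, ho.2.2.2⟩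

/-- The linking number `J(rx, sy)` of the chords `rx` and `sy` (computed with respect to
some cut point distinct from the four points; by the independence of the choice this is
the linking number). -/
def linkQ (r x s y : Circle1) : ℚ := linkingAt (exists_cut r x s y).choose r x s y

/-- The set of points of the circle `l`, listed in anticlockwise (cyclic) order:
there is a cut point `o` avoiding them such that the induced coordinates are
strictly increasing along the list. -/
def AnticlockwiseList (l : List Circle1) : Prop :=
  ∃ o : Circle1, (∀ p ∈ l, p ≠ o) ∧ (l.map (coordAt o)).Chain' (· < ·)

/-- Index type for the generators `xy` of the swapping ring of `P`
(one generator for each ordered pair of distinct points; the generators `xx`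
are identified with `0`). -/
abbrev SwapIdx (P : Set Circle1) : Type := {q : (↥P) × (↥P) // q.1 ≠ q.2}

/-- The swapping ring `Z(P)`: the polynomial ring over `K` on the generators `xy`,
`x ≠ y ∈ P` (this realizes the commutative ring generated by all ordered pairs `xy`
subject to the relations `xx = 0`). -/
abbrev SwapRing (K : Type) [Field K] (P : Set Circle1) : Type := MvPolynomial (SwapIdx P) K

/-- The generator `xy` of the swapping ring (equal to `0` when `x = y`). -/
def gen (K : Type) [Field K] (P : Set Circle1) (x y : ↥P) : SwapRing K P :=
  if h : x ≠ y then MvPolynomial.X (⟨(x, y), h⟩ : SwapIdx P) else 0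

/-- The value of the `(c1,c2)`-swapping bracket on two generators `rx` and `sy`:
`J(rx,sy) • (c1 • ry·sx + c2 • rx·sy)`. -/
def genBr (K : Type) [Field K] (P : Set Circle1) (c1 c2 : K) (g g' : SwapIdx P) :
    SwapRing K P :=
  ((linkQ g.1.1.1 g.1.2.1 g'.1.1.1 g'.1.2.1 : ℚ) : K) •
    (c1 • (gen K P g.1.1 g'.1.2 * gen K P g'.1.1 g.1.2)
      + c2 • (gen K P g.1.1 g.1.2 * gen K P g'.1.1 g'.1.2))

/-- The `(c1,c2)`-swapping bracket on `Z(P)`: the biderivation extending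
`{rx, sy} = J(rx,sy)·(c1·ry·sx + c2·rx·sy)` by the Leibniz rule in each argument.
The swapping bracket is the case `c1 = 1, c2 = 0`. -/
def swapBr (K : Type) [Field K] (P : Set Circle1) (c1 c2 : K) (a b : SwapRing K P) :
    SwapRing K P :=
  (MvPolynomial.mkDerivation K
    (fun g : SwapIdx P => (MvPolynomial.mkDerivation K (genBr K P c1 c2 g)) b)) a

/-- `Δ((x_1,…,x_m),(y_1,…,y_m)) = det (x_i y_j)` in the swapping ring. -/
def Dmat (K : Type) [Field K] (P : Set Circle1) (m : ℕ) (xs ys : Fin m → ↥P) :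
    SwapRing K P :=
  Matrix.det (Matrix.of fun i j => gen K P (xs i) (ys j))

/-- The ideal `R_n(P)` of `Z(P)` generated by all `(n+1)×(n+1)` determinants
`Δ((x_1,…,x_{n+1}),(y_1,…,y_{n+1}))`. -/
def Rideal (K : Type) [Field K] (P : Set Circle1) (n : ℕ) : Ideal (SwapRing K P) :=
  Ideal.span {D : SwapRing K P | ∃ xs ys : Fin (n+1) → ↥P, D = Dmat K P (n+1) xs ys}

/-- The rank `n` swapping ring `Z_n(P) = Z(P)/R_n(P)`. -/
abbrev ZnRing (K : Type) [Field K] (P : Set Circle1) (n : ℕ) : Type :=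
  SwapRing K P ⧸ Rideal K P n

/-- The quotient map `Z(P) → Z_n(P)`. -/
def toZn (K : Type) [Field K] (P : Set Circle1) (n : ℕ) :
    SwapRing K P →+* ZnRing K P n := Ideal.Quotient.mk (Rideal K P n)

/-- The total fraction ring `Q_n(P)` of the rank `n` swapping ring. -/
abbrev QnRing (K : Type) [Field K] (P : Set Circle1) (n : ℕ) : Type :=
  Localization (nonZeroDivisors (ZnRing K P n))

/-- The canonical map `Z(P) → Q_n(P)`. -/
def toQn (K : Type) [Field K] (P : Set Circle1) (n : ℕ) :
    SwapRing K P →+* QnRing K P n :=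
  (algebraMap (ZnRing K P n) (QnRing K P n)).comp (toZn K P n)

/-- `Bq` is the extension to the total fraction ring `Q_n(P)` of the `(c1,c2)`-swapping
bracket of the rank `n` swapping algebra: it agrees with the swapping bracket on the image
of `Z(P)` and satisfies the Leibniz rule in both arguments (these properties determine it
uniquely). -/
def IsQnBracket (K : Type) [Field K] (P : Set Circle1) (n : ℕ) (c1 c2 : K)
    (Bq : QnRing K P n → QnRing K P n → QnRing K P n) : Prop :=
  (∀ a b : SwapRing K P,
      Bq (toQn K P n a) (toQn K P n b) = toQn K P n (swapBr K P c1 c2 a b)) ∧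
  (∀ a b c : QnRing K P n, Bq (a * b) c = a * Bq b c + b * Bq a c) ∧
  (∀ a b c : QnRing K P n, Bq a (b * c) = b * Bq a c + c * Bq a b)

/-- The `n`-tuple `(x_1, …, x_a, y_1, …, y_b, z_1, …, z_{n-a-b})` built from three
families of points (families are indexed from `0`, i.e. `x 0 = x_1`). -/
def rows3 {α : Type*} {n : ℕ} (x y z : ℕ → α) (a b : ℕ) : Fin n → α :=
  fun i => if (i : ℕ) < a then x (i : ℕ)
    else if (i : ℕ) < a + b then y ((i : ℕ) - a)
    else z ((i : ℕ) - (a + b))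

/-- The `n`-tuple `(x_1, …, x_a, y_1, …, y_b, z_1, …, z_{n-1-a-b}, w)` built from three
families of points and a final point `w`. -/
def rows3s {α : Type*} {n : ℕ} (x y z : ℕ → α) (a b : ℕ) (w : α) : Fin n → α :=
  fun i => if (i : ℕ) < a then x (i : ℕ)
    else if (i : ℕ) < a + b then y ((i : ℕ) - a)
    else if (i : ℕ) < n - 1 then z ((i : ℕ) - (a + b))
    else w

/-- The `n`-tuple `(x_1, …, x_{n-1}, t)`. -/
def snocTup {α : Type*} {n : ℕ} (x : ℕ → α) (t : α) : Fin n → α :=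
  fun i => if (i : ℕ) < n - 1 then x (i : ℕ) else t

/-- The list `f_a, f_{a-1}, …, f_1` (descending enumeration). -/
def descPts (f : ℕ → Circle1) (a : ℕ) : List Circle1 := ((List.range a).map f).reverse

/-- The list `f_1, f_2, …, f_a` (ascending enumeration). -/
def ascPts (f : ℕ → Circle1) (a : ℕ) : List Circle1 := (List.range a).map f

/-- The `(n×n)`-determinant quotient `Δ(numR, v)/Δ(denR, v)` as an element of the total
fraction ring `Q_n(P)`. -/
def EQuot (K : Type) [Field K] (P : Set Circle1) (n : ℕ)
    (numR denR v : Fin n → ↥P)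
    (h : toZn K P n (Dmat K P n denR v) ∈ nonZeroDivisors (ZnRing K P n)) :
    QnRing K P n :=
  Localization.mk (toZn K P n (Dmat K P n numR v)) ⟨toZn K P n (Dmat K P n denR v), h⟩


/-- Index type for the generators `(i; xy)` of the glued swapping ring of a family of
cyclically ordered sets of points `P i`, each on its own circle. -/
abbrev SwapIdxF {I : Type} (P : I → Set Circle1) : Type :=
  Σ i : I, {q : (↥(P i)) × (↥(P i)) // q.1 ≠ q.2}

/-- The glued swapping ring: the commutative `K`-algebra with one generator `(i; xy)` for
each index `i` and each ordered pair `(x,y)` of points of `P i`, modulo `(i; xx) = 0`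
(generators attached to different indices being distinct). -/
abbrev SwapRingF (K : Type) [Field K] {I : Type} (P : I → Set Circle1) : Type :=
  MvPolynomial (SwapIdxF P) K

/-- The generator `(i; xy)` (equal to `0` if `x ∉ P i`, `y ∉ P i` or `x = y`). -/
def genF (K : Type) [Field K] {I : Type} (P : I → Set Circle1) (i : I) (x y : Circle1) :
    SwapRingF K P :=
  if h : x ∈ P i ∧ y ∈ P i ∧ x ≠ y then
    MvPolynomial.X ⟨i, ⟨(⟨x, h.1⟩, ⟨y, h.2.1⟩), fun hc => h.2.2 (congrArg Subtype.val hc)⟩⟩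
  else 0

/-- The value of the glued bracket on two generators: the swapping bracket of `P i` if the
two generators are attached to the same index `i`, and `0` otherwise. -/
def genBrF (K : Type) [Field K] {I : Type} (P : I → Set Circle1)
    (g g' : SwapIdxF P) : SwapRingF K P :=
  if g.1 = g'.1 then
    ((linkQ g.2.1.1.1 g.2.1.2.1 g'.2.1.1.1 g'.2.1.2.1 : ℚ) : K) •
      (genF K P g.1 g.2.1.1.1 g'.2.1.2.1 * genF K P g.1 g'.2.1.1.1 g.2.1.2.1)
  else 0

/-- The glued bracket: the biderivation extending, by the Leibniz rule in each argument,
the swapping bracket of `P i` on pairs of generators attached to the same index `i` and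
`0` on pairs of generators attached to different indices. -/
def swapBrF (K : Type) [Field K] {I : Type} (P : I → Set Circle1)
    (a b : SwapRingF K P) : SwapRingF K P :=
  (MvPolynomial.mkDerivation K
    (fun g : SwapIdxF P => (MvPolynomial.mkDerivation K (genBrF K P g)) b)) a

/-!
A biderivation is determined by its values on generators; so is its antisymmetry, and, once it is
antisymmetric, so is the Jacobi identity, because the Jacobiator is then a derivation in each
variable. On generators, write `σ a b` for half the sign of `a - b` in the coordinate of the circle
cut at `0`. Moving the cut changes `σ` by a coboundary, so
`J(rx, sy) = σ r y + σ y x - σ r s - σ s x` whatever the cut. The Jacobiator of `rx`, `sy`, `tz` is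
then a multiple of `rz·sx·ty - ry·tx·sz`, and its coefficient is the alternating sum, over the
choices of one endpoint per chord, of `σ a b σ b c + σ b c σ c a + σ c a σ a b`. This expression is
`-1/4` unless `a = b = c`, so the only terms that do not cancel are those of three chords sharing an
endpoint. For these `rz·sx·ty = ry·tx·sz`, either by commutativity or because both vanish.
-/

/-- A biderivation of a commutative algebra `A`, curried: a derivation of `A` with values in the
`A`-module of derivations of `A`. -/
abbrev Biderivation (R A : Type*) [CommRing R] [CommRing A] [Algebra R A] : Type _ :=
  Derivation R A (Derivation R A A)

namespace Biderivation

section Algebra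

variable {R A : Type*} [CommRing R] [CommRing A] [Algebra R A]

/-- The biderivation `(a, b) ↦ B b a`, used to express antisymmetry as an equation between
biderivations. -/
def flip (B : Biderivation R A) : Biderivation R A :=
  Derivation.mk'
    { toFun b :=
        Derivation.mk'
          { toFun a := B a b
            map_add' := by simp
            map_smul' := by simp }
          (by simp)
      map_add' _ _ := by ext; simp
      map_smul' _ _ := by ext; simp }
    (fun _ _ ↦ by ext; simp)

@[simp]
lemma flip_apply (B : Biderivation R A) (a b : A) : B.flip a b = B b a := rfl

lemma ext_of_adjoin_eq_top {B C : Biderivation R A} {S : Set A} (hS : Algebra.adjoin R S = ⊤)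
    (h : ∀ a ∈ S, ∀ b ∈ S, B a b = C a b) : B = C :=
  Derivation.ext_of_adjoin_eq_top S hS fun a ha ↦
    Derivation.ext_of_adjoin_eq_top S hS fun b hb ↦ h a ha b hb

theorem antisymm_of_adjoin_eq_top (B : Biderivation R A) {S : Set A}
    (hS : Algebra.adjoin R S = ⊤) (h : ∀ a ∈ S, ∀ b ∈ S, B a b = -B b a) (a b : A) :
    B a b = -B b a := by
  have hflip : B = -B.flip := ext_of_adjoin_eq_top hS h
  exact DFunLike.congr_fun (DFunLike.congr_fun hflip a) b

/-- The Jacobiator of a bracket, whose vanishing is the Jacobi identity. -/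
def jacobiator (B : Biderivation R A) (a b c : A) : A :=
  B a (B b c) + B b (B c a) + B c (B a b)

lemma jacobiator_rotate (B : Biderivation R A) (a b c : A) :
    B.jacobiator a b c = B.jacobiator b c a := by
  unfold jacobiator
  ring

lemma jacobiator_eq_commutator_sub (B : Biderivation R A) (hB : ∀ a b, B a b = -B b a)
    (a b c : A) : B.jacobiator a b c = (⁅B a, B b⁆ - B (B a b)) c := by
  rw [Derivation.sub_apply, Derivation.commutator_apply, jacobiator, hB c (B a b), hB c a, map_neg]
  ring

lemma jacobiator_eq_zero_of_forall_mem (B : Biderivation R A) (hB : ∀ a b, B a b = -B b a)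
    {S : Set A} (hS : Algebra.adjoin R S = ⊤) {a b : A} (h : ∀ c ∈ S, B.jacobiator a b c = 0)
    (c : A) : B.jacobiator a b c = 0 := by
  have hder : ⁅B a, B b⁆ - B (B a b) = 0 := Derivation.ext_of_adjoin_eq_top S hS fun c hc ↦ by
    rw [← jacobiator_eq_commutator_sub B hB, h c hc, Derivation.zero_apply]
  rw [jacobiator_eq_commutator_sub B hB, hder, Derivation.zero_apply]

theorem jacobiator_eq_zero_of_adjoin_eq_top (B : Biderivation R A) (hB : ∀ a b, B a b = -B b a)
    {S : Set A} (hS : Algebra.adjoin R S = ⊤)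
    (h : ∀ a ∈ S, ∀ b ∈ S, ∀ c ∈ S, B.jacobiator a b c = 0) (a b c : A) :
    B.jacobiator a b c = 0 := by
  refine jacobiator_eq_zero_of_forall_mem B hB hS (fun c hc ↦ ?_) c
  rw [← jacobiator_rotate]
  refine jacobiator_eq_zero_of_forall_mem B hB hS (fun b hb ↦ ?_) b
  rw [← jacobiator_rotate]
  exact jacobiator_eq_zero_of_forall_mem B hB hS (h b hb c hc) a

end Algebra

section MvPolynomial

variable {R τ : Type*} [CommRing R]

/-- The biderivation of a polynomial ring with prescribed values on pairs of variables. -/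
def ofVars (β : τ → τ → MvPolynomial τ R) : Biderivation R (MvPolynomial τ R) :=
  mkDerivation R fun g ↦ mkDerivation R (β g)

@[simp]
lemma ofVars_X_X (β : τ → τ → MvPolynomial τ R) (g h : τ) : ofVars β (X g) (X h) = β g h := by
  simp [ofVars]

lemma ofVars_apply (β : τ → τ → MvPolynomial τ R) (a b : MvPolynomial τ R) :
    ofVars β a b = mkDerivation R (fun g ↦ mkDerivation R (β g) b) a := by
  have hder : (ofVars β).flip b = mkDerivation R fun g ↦ mkDerivation R (β g) b :=
    derivation_ext fun g ↦ by simp [ofVars]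
  exact DFunLike.congr_fun hder a

theorem ofVars_antisymm {β : τ → τ → MvPolynomial τ R} (hβ : ∀ g h, β g h = -β h g)
    (a b : MvPolynomial τ R) : ofVars β a b = -ofVars β b a := by
  refine antisymm_of_adjoin_eq_top _ adjoin_range_X ?_ a b
  rintro _ ⟨g, rfl⟩ _ ⟨h, rfl⟩
  rw [ofVars_X_X, ofVars_X_X, hβ]

theorem jacobiator_ofVars_eq_zero {β : τ → τ → MvPolynomial τ R} (hβ : ∀ g h, β g h = -β h g)
    (hjac : ∀ g h k, (ofVars β).jacobiator (X g) (X h) (X k) = 0) (a b c : MvPolynomial τ R) :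
    (ofVars β).jacobiator a b c = 0 := by
  refine jacobiator_eq_zero_of_adjoin_eq_top _ (ofVars_antisymm hβ) adjoin_range_X ?_ a b c
  rintro _ ⟨g, rfl⟩ _ ⟨h, rfl⟩ _ ⟨k, rfl⟩
  exact hjac g h k

end MvPolynomial

end Biderivation

section Swapping

variable {α R : Type*} [CommRing R]

/-- The sum of the products of two among `σ a b`, `σ b c`, `σ c a`. -/
def cyclicSum (σ : α → α → R) (a b c : α) : R :=
  σ a b * σ b c + σ b c * σ c a + σ c a * σ a b

/-- The properties of a multiple `σ` of the sign function of a linear order that make the swapping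
bracket satisfy the Jacobi identity. For the sign itself, `κ = -1`. -/
structure IsSwappingSign (σ : α → α → R) (κ : R) : Prop where
  antisymm (a b : α) : σ a b = -σ b a
  cyclicSum_eq (a b c : α) (h : ¬(a = b ∧ b = c)) : cyclicSum σ a b c = κ

/-- The linking number of the chords `rx` and `sy` when `σ` is half the sign function. -/
def chordLinking (σ : α → α → R) (r x s y : α) : R :=
  σ r y + σ y x - σ r s - σ s x

/-- The alternating sum of `cyclicSum σ` over the choices of one endpoint on each of the chords
`rx`, `sy`, `tz`. -/
def endpointSum (σ : α → α → R) (r x s y t z : α) : R :=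
  cyclicSum σ r s t - cyclicSum σ r s z - cyclicSum σ r y t + cyclicSum σ r y z
    - cyclicSum σ x s t + cyclicSum σ x s z + cyclicSum σ x y t - cyclicSum σ x y z

lemma chordLinking_self_left {σ : α → α → R} (hσ : ∀ a b, σ a b = -σ b a) (r s y : α) :
    chordLinking σ r r s y = 0 := by
  rw [chordLinking, hσ y r, hσ s r]
  ring

lemma chordLinking_self_right (σ : α → α → R) (r x s : α) : chordLinking σ r x s s = 0 := by
  unfold chordLinking
  ring

lemma chordLinking_antisymm {σ : α → α → R} (hσ : ∀ a b, σ a b = -σ b a) (r x s y : α) :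
    chordLinking σ r x s y = -chordLinking σ s y r x := by
  rw [chordLinking, chordLinking, hσ r y, hσ y x, hσ r s, hσ s x]
  ring

lemma chordLinking_cyclic_eq_endpointSum {σ : α → α → R} (hσ : ∀ a b, σ a b = -σ b a)
    (r x s y t z : α) :
    chordLinking σ s y t z * chordLinking σ r x s z
      + chordLinking σ t z r x * chordLinking σ s y t x
      + chordLinking σ r x s y * chordLinking σ t z r y = endpointSum σ r x s y t z := by
  simp only [chordLinking, endpointSum, cyclicSum, hσ t r, hσ z r, hσ s x, hσ y x, hσ t x, hσ z x,
    hσ t y, hσ z y]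
  ring

lemma chordLinking_cyclic_eq_neg_endpointSum {σ : α → α → R} (hσ : ∀ a b, σ a b = -σ b a)
    (r x s y t z : α) :
    chordLinking σ s y t z * chordLinking σ r x t y
      + chordLinking σ t z r x * chordLinking σ s y r z
      + chordLinking σ r x s y * chordLinking σ t z s x = -endpointSum σ r x s y t z := by
  simp only [chordLinking, endpointSum, cyclicSum, hσ s r, hσ t r, hσ z r, hσ s x, hσ y x, hσ t x,
    hσ z x, hσ t s, hσ t y, hσ z y]
  ring

namespace IsSwappingSign

variable {A : Type*} [CommRing A] [Algebra R A] {σ : α → α → R} {κ : R}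

lemma comp_injective (hσ : IsSwappingSign σ κ) {β : Type*} {p : β → α}
    (hp : Function.Injective p) : IsSwappingSign (fun a b ↦ σ (p a) (p b)) κ where
  antisymm a b := hσ.antisymm (p a) (p b)
  cyclicSum_eq a b c h := hσ.cyclicSum_eq (p a) (p b) (p c) (by rwa [hp.eq_iff, hp.eq_iff])

lemma cyclicSum_sub_smul_eq_zero (hσ : IsSwappingSign σ κ) {a b c : α} {u : A}
    (hu : a = b → b = c → u = 0) : (cyclicSum σ a b c - κ) • u = 0 := by
  by_cases h : a = b ∧ b = c
  · rw [hu h.1 h.2, smul_zero]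
  · rw [hσ.cyclicSum_eq a b c h, sub_self, zero_smul]

lemma endpointSum_smul_eq_zero (hσ : IsSwappingSign σ κ) {f : α → α → A} (hf : ∀ x, f x x = 0)
    (r x s y t z : α) :
    endpointSum σ r x s y t z • (f r z * f s x * f t y - f r y * f t x * f s z) = 0 := by
  set u := f r z * f s x * f t y - f r y * f t x * f s z with hu
  have hrst : (cyclicSum σ r s t - κ) • u = 0 :=
    hσ.cyclicSum_sub_smul_eq_zero (by rintro rfl rfl; rw [hu]; ring)
  have hxyz : (cyclicSum σ x y z - κ) • u = 0 :=
    hσ.cyclicSum_sub_smul_eq_zero (by rintro rfl rfl; rw [hu]; ring)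
  have hrsz : (cyclicSum σ r s z - κ) • u = 0 :=
    hσ.cyclicSum_sub_smul_eq_zero (by rintro rfl rfl; simp [hu, hf])
  have hryt : (cyclicSum σ r y t - κ) • u = 0 :=
    hσ.cyclicSum_sub_smul_eq_zero (by rintro rfl rfl; simp [hu, hf])
  have hryz : (cyclicSum σ r y z - κ) • u = 0 :=
    hσ.cyclicSum_sub_smul_eq_zero (by rintro rfl rfl; simp [hu, hf])
  have hxst : (cyclicSum σ x s t - κ) • u = 0 :=
    hσ.cyclicSum_sub_smul_eq_zero (by rintro rfl rfl; simp [hu, hf])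
  have hxsz : (cyclicSum σ x s z - κ) • u = 0 :=
    hσ.cyclicSum_sub_smul_eq_zero (by rintro rfl rfl; simp [hu, hf])
  have hxyt : (cyclicSum σ x y t - κ) • u = 0 :=
    hσ.cyclicSum_sub_smul_eq_zero (by rintro rfl rfl; simp [hu, hf])
  rw [endpointSum]
  linear_combination (norm := module) hrst - hrsz - hryt + hryz - hxst + hxsz + hxyt - hxyz

theorem jacobiator_eq_zero (hσ : IsSwappingSign σ κ) {f : α → α → A} (hf : ∀ x, f x x = 0)
    (B : Biderivation R A)
    (hB : ∀ r x s y, B (f r x) (f s y) = chordLinking σ r x s y • (f r y * f s x))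
    (r x s y t z : α) : B.jacobiator (f r x) (f s y) (f t z) = 0 := by
  have hnested (r x s y t z : α) : B (f r x) (B (f s y) (f t z)) =
      (chordLinking σ s y t z * chordLinking σ r x s z) • (f r z * f s x * f t y)
        + (chordLinking σ s y t z * chordLinking σ r x t y) • (f r y * f t x * f s z) := by
    simp only [hB, Derivation.map_smul, Derivation.leibniz, smul_eq_mul]
    simp only [Algebra.smul_def, map_mul]
    ring
  rw [← hσ.endpointSum_smul_eq_zero hf r x s y t z, smul_sub, sub_eq_add_neg, ← neg_smul,
    ← chordLinking_cyclic_eq_neg_endpointSum hσ.antisymm,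
    ← chordLinking_cyclic_eq_endpointSum hσ.antisymm]
  simp only [Biderivation.jacobiator, hnested, Algebra.smul_def, map_add]
  ring

end IsSwappingSign

end Swapping

section OrderSign

variable {α : Type*} [LinearOrder α]

/-- The sign of `a - b`, read off from the order alone. -/
def orderSign (a b : α) : ℤ :=
  if a < b then -1 else if a = b then 0 else 1

lemma isSwappingSign_orderSign : IsSwappingSign (orderSign : α → α → ℤ) (-1) where
  antisymm a b := by
    unfold orderSign
    grind
  cyclicSum_eq a b c h := by
    unfold cyclicSum orderSign
    grind

lemma orderSign_mul_mul (a b c : α) :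
    orderSign a c * orderSign a b * orderSign b c =
      orderSign a b + orderSign b c - orderSign a c := by
  unfold orderSign
  grind

end OrderSign

section Circle

lemma sgnQ_sub (a b : ℝ) : sgnQ (a - b) = orderSign a b := by
  simp only [sgnQ, orderSign, sub_neg, sub_eq_zero]
  split_ifs <;> simp

lemma fract_sub_eq_add_ite {F : Type*} [CommRing F] [LinearOrder F] [IsStrictOrderedRing F]
    [FloorRing F] (a b : F) :
    Int.fract (a - b) =
      Int.fract a - Int.fract b + if Int.fract a < Int.fract b then 1 else 0 := by
  rw [Int.fract_eq_iff]
  have ha := Int.fract_nonneg a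
  have hb := Int.fract_nonneg b
  have ha' := Int.fract_lt_one a
  have hb' := Int.fract_lt_one b
  have hfa := Int.self_sub_floor a
  have hfb := Int.self_sub_floor b
  split_ifs with h
  · refine ⟨by linarith, by linarith, ⌊a⌋ - ⌊b⌋ - 1, ?_⟩
    push_cast
    linarith
  · refine ⟨by linarith, by linarith, ⌊a⌋ - ⌊b⌋, ?_⟩
    push_cast
    linarith

lemma coordAt_coe (b a : ℝ) : coordAt (b : Circle1) (a : Circle1) = Int.fract (a - b) := by
  rw [coordAt, ← AddCircle.coe_sub, AddCircle.coe_equivIco_mk_apply, div_one, mul_one]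

lemma coordAt_injective (o : Circle1) : Function.Injective (coordAt o) :=
  Subtype.val_injective.comp ((AddCircle.equivIco 1 0).injective.comp sub_left_injective)

lemma coordAt_mem_Ico (o x : Circle1) : coordAt o x ∈ Set.Ico (0 : ℝ) 1 := by
  simpa [coordAt] using (AddCircle.equivIco (1 : ℝ) 0 (x - o)).2

lemma coordAt_eq_add_ite (o x : Circle1) :
    coordAt o x = coordAt 0 x - coordAt 0 o + if coordAt 0 x < coordAt 0 o then 1 else 0 := by
  induction x using QuotientAddGroup.induction_on with | H a
  induction o using QuotientAddGroup.induction_on with | H b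
  have hzero (c : ℝ) : coordAt 0 (c : Circle1) = Int.fract c := by
    simpa using coordAt_coe 0 c
  exact (coordAt_coe b a).trans (by rw [hzero, hzero, fract_sub_eq_add_ite])

/-- The sign of `a - b` in the coordinate of the circle cut at `0`. -/
def circleSign (a b : Circle1) : ℤ :=
  orderSign (coordAt 0 a) (coordAt 0 b)

lemma orderSign_coordAt (o a b : Circle1) :
    orderSign (coordAt o a) (coordAt o b) =
      circleSign a b + 2 * ((if coordAt 0 a < coordAt 0 o then 1 else 0)
        - if coordAt 0 b < coordAt 0 o then 1 else 0) := by
  have ha := coordAt_mem_Ico 0 a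
  have hb := coordAt_mem_Ico 0 b
  rw [coordAt_eq_add_ite o a, coordAt_eq_add_ite o b]
  unfold circleSign orderSign
  grind

lemma linkingAt_eq_chordLinking (o r x s y : Circle1) :
    linkingAt o r x s y = (chordLinking circleSign r x s y : ℤ) / 2 := by
  have hprod (a b c : Circle1) := congrArg (Int.cast : ℤ → ℚ)
    (orderSign_mul_mul (coordAt o a) (coordAt o b) (coordAt o c))
  push_cast at hprod
  rw [linkingAt]
  simp only [sgnQ_sub, hprod, chordLinking]
  simp only [orderSign_coordAt o]
  push_cast
  ring

lemma linkQ_eq_chordLinking (r x s y : Circle1) :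
    linkQ r x s y = (chordLinking circleSign r x s y : ℤ) / 2 :=
  linkingAt_eq_chordLinking _ r x s y

lemma isSwappingSign_circleSign : IsSwappingSign circleSign (-1) :=
  isSwappingSign_orderSign.comp_injective (coordAt_injective 0)

lemma linkQ_self_left (r s y : Circle1) : linkQ r r s y = 0 := by
  rw [linkQ_eq_chordLinking, chordLinking_self_left isSwappingSign_circleSign.antisymm,
    Int.cast_zero, zero_div]

lemma linkQ_self_right (r x s : Circle1) : linkQ r x s s = 0 := by
  rw [linkQ_eq_chordLinking, chordLinking_self_right, Int.cast_zero, zero_div]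

lemma linkQ_antisymm (r x s y : Circle1) : linkQ r x s y = -linkQ s y r x := by
  rw [linkQ_eq_chordLinking, linkQ_eq_chordLinking,
    chordLinking_antisymm isSwappingSign_circleSign.antisymm, Int.cast_neg, neg_div]

/-- Half of `circleSign`, with values in the field of coefficients. -/
def halfSign (K : Type*) [Field K] (a b : Circle1) : K :=
  (circleSign a b : K) / 2

variable {K : Type*} [Field K]

lemma isSwappingSign_halfSign : IsSwappingSign (halfSign K) (-2⁻¹ ^ 2) where
  antisymm a b := by
    rw [halfSign, halfSign, isSwappingSign_circleSign.antisymm]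
    push_cast
    ring
  cyclicSum_eq a b c h := by
    have hsum := congrArg (Int.cast : ℤ → K) (isSwappingSign_circleSign.cyclicSum_eq a b c h)
    simp only [cyclicSum] at hsum
    push_cast at hsum
    simp only [cyclicSum, halfSign]
    linear_combination 2⁻¹ ^ 2 * hsum

lemma cast_linkQ (hK : (2 : K) ≠ 0) (r x s y : Circle1) :
    (linkQ r x s y : K) = chordLinking (halfSign K) r x s y := by
  rw [linkQ_eq_chordLinking, Rat.cast_div_of_ne_zero (by simp) (by simpa), Rat.cast_intCast]
  simp only [chordLinking, halfSign]
  push_cast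
  ring

end Circle

section Glued

variable (K : Type) [Field K] {I : Type} (P : I → Set Circle1)

/-- The glued bracket `swapBrF`, bundled as a biderivation. -/
def gluedBracket : Biderivation K (SwapRingF K P) :=
  Biderivation.ofVars (genBrF K P)

lemma swapBrF_eq_gluedBracket (a b : SwapRingF K P) : swapBrF K P a b = gluedBracket K P a b :=
  (Biderivation.ofVars_apply (genBrF K P) a b).symm

variable {K P}

lemma genF_self (i : I) (x : Circle1) : genF K P i x x = 0 := by
  simp [genF]

lemma genF_eq_X {i : I} {x y : P i} (h : x ≠ y) : genF K P i x y = X ⟨i, (x, y), h⟩ :=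
  dif_pos ⟨x.2, y.2, Subtype.coe_ne_coe.mpr h⟩

lemma gluedBracket_X_X (g h : SwapIdxF P) :
    gluedBracket K P (X g) (X h) = genBrF K P g h :=
  Biderivation.ofVars_X_X _ g h

lemma gluedBracket_genF_genF_of_ne {i j : I} (hij : i ≠ j) (r x : P i) (s y : P j) :
    gluedBracket K P (genF K P i r x) (genF K P j s y) = 0 := by
  obtain rfl | hrx := eq_or_ne r x
  · rw [genF_self, map_zero, Derivation.zero_apply]
  obtain rfl | hsy := eq_or_ne s y
  · rw [genF_self, map_zero]
  rw [genF_eq_X hrx, genF_eq_X hsy, gluedBracket_X_X, genBrF, if_neg hij]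

lemma gluedBracket_genF_genF {i : I} (r x s y : P i) :
    gluedBracket K P (genF K P i r x) (genF K P i s y) =
      (linkQ r x s y : K) • (genF K P i r y * genF K P i s x) := by
  obtain rfl | hrx := eq_or_ne r x
  · rw [genF_self, map_zero, Derivation.zero_apply, linkQ_self_left, Rat.cast_zero, zero_smul]
  obtain rfl | hsy := eq_or_ne s y
  · rw [genF_self, map_zero, linkQ_self_right, Rat.cast_zero, zero_smul]
  rw [genF_eq_X hrx, genF_eq_X hsy, gluedBracket_X_X, genBrF, if_pos rfl]

lemma genBrF_antisymm (g h : SwapIdxF P) : genBrF K P g h = -genBrF K P h g := by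
  obtain ⟨i, g⟩ := g
  obtain ⟨j, h⟩ := h
  obtain rfl | hij := eq_or_ne i j
  · rw [genBrF, genBrF, if_pos rfl, if_pos rfl, linkQ_antisymm, Rat.cast_neg, neg_smul,
      mul_comm (genF K P i _ _)]
  · rw [genBrF, genBrF, if_neg hij, if_neg hij.symm, neg_zero]

variable (P) in
lemma gluedBracket_antisymm (a b : SwapRingF K P) :
    gluedBracket K P a b = -gluedBracket K P b a :=
  Biderivation.ofVars_antisymm genBrF_antisymm a b

lemma gluedBracket_nested_eq_zero {i j k : I} (h : ¬(i = j ∧ j = k))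
    (r x : P i) (s y : P j) (t z : P k) :
    gluedBracket K P (genF K P i r x) (gluedBracket K P (genF K P j s y) (genF K P k t z)) = 0 := by
  obtain rfl | hjk := eq_or_ne j k
  · have hij : i ≠ j := fun hij ↦ h ⟨hij, rfl⟩
    simp only [gluedBracket_genF_genF, Derivation.map_smul, Derivation.leibniz,
      gluedBracket_genF_genF_of_ne hij, smul_zero, add_zero]
  · rw [gluedBracket_genF_genF_of_ne hjk, map_zero]

lemma jacobiator_gluedBracket_genF_eq_zero (hK : (2 : K) ≠ 0) {i j k : I}
    (r x : P i) (s y : P j) (t z : P k) :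
    (gluedBracket K P).jacobiator (genF K P i r x) (genF K P j s y) (genF K P k t z) = 0 := by
  by_cases h : i = j ∧ j = k
  · obtain ⟨rfl, rfl⟩ := h
    exact (isSwappingSign_halfSign.comp_injective Subtype.val_injective).jacobiator_eq_zero
      (f := fun a b : P i ↦ genF K P i a b) (fun a ↦ genF_self i a) _
      (fun r x s y ↦ by rw [gluedBracket_genF_genF, cast_linkQ hK]; rfl) r x s y t z
  · rw [Biderivation.jacobiator, gluedBracket_nested_eq_zero h,
      gluedBracket_nested_eq_zero (by grind), gluedBracket_nested_eq_zero (by grind),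
      add_zero, add_zero]

variable (P) in
theorem jacobiator_gluedBracket_eq_zero (hK : (2 : K) ≠ 0) (a b c : SwapRingF K P) :
    (gluedBracket K P).jacobiator a b c = 0 := by
  refine Biderivation.jacobiator_ofVars_eq_zero genBrF_antisymm ?_ a b c
  rintro ⟨i, ⟨r, x⟩, hrx⟩ ⟨j, ⟨s, y⟩, hsy⟩ ⟨k, ⟨t, z⟩, htz⟩
  rw [← genF_eq_X hrx, ← genF_eq_X hsy, ← genF_eq_X htz]
  exact jacobiator_gluedBracket_genF_eq_zero hK r x s y t z

end Glued

theorem glued_swapping_bracket_is_poisson_general (K : Type) [Field K] (hK : (2 : K) ≠ 0)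
    {I : Type} (P : I → Set Circle1) :
    (∀ a b : SwapRingF K P, swapBrF K P a b = - swapBrF K P b a) ∧
    (∀ a b c : SwapRingF K P,
      swapBrF K P (a * b) c = a * swapBrF K P b c + b * swapBrF K P a c) ∧
    (∀ a b c : SwapRingF K P,
      swapBrF K P a (b * c) = b * swapBrF K P a c + c * swapBrF K P a b) ∧
    (∀ a b c : SwapRingF K P,
      swapBrF K P a (swapBrF K P b c) + swapBrF K P b (swapBrF K P c a)
        + swapBrF K P c (swapBrF K P a b) = 0) := by
  simp only [swapBrF_eq_gluedBracket]
  refine ⟨gluedBracket_antisymm P, fun a b c ↦ ?_, fun a b c ↦ ?_,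
    jacobiator_gluedBracket_eq_zero P hK⟩
  · rw [Derivation.leibniz, Derivation.add_apply, Derivation.smul_apply, Derivation.smul_apply,
      smul_eq_mul, smul_eq_mul]
  · rw [Derivation.leibniz, smul_eq_mul, smul_eq_mul]

/-- For a family `(P i)_{i ∈ I}` of cyclically ordered sets of points,
each on its own circle, the glued bracket — equal to the swapping bracket of `P i` on
generators with the same index and to `0` on generators with different indices, extended
by the Leibniz rule and antisymmetry — is a Poisson bracket on the glued swapping ring:
it is antisymmetric, a biderivation, and satisfies the Jacobi identity. -/
theorem glued_swapping_bracket_is_poisson (K : Type) [Field K] [CharZero K]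
    {I : Type} (P : I → Set Circle1) :
    (∀ a b : SwapRingF K P, swapBrF K P a b = - swapBrF K P b a) ∧
    (∀ a b c : SwapRingF K P,
      swapBrF K P (a * b) c = a * swapBrF K P b c + b * swapBrF K P a c) ∧
    (∀ a b c : SwapRingF K P,
      swapBrF K P a (b * c) = b * swapBrF K P a c + c * swapBrF K P a b) ∧
    (∀ a b c : SwapRingF K P,
      swapBrF K P a (swapBrF K P b c) + swapBrF K P b (swapBrF K P c a)
        + swapBrF K P c (swapBrF K P a b) = 0) :=
  glued_swapping_bracket_is_poisson_general K two_ne_zero P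

end
end

section
/- Let m > n ≥ 2 and let P = {a_1, …, a_m} be m points ordered anticlockwise on a circle. Consider the polynomial ring K[x_{ij} : n < i ≤ m, 1 ≤ j ≤ n], the coordinate ring of the subspace of m×n matrices whose first n rows form the identity matrix (so x_{ij} = δ_{ij} for 1 ≤ i ≤ n), equipped with the standard Poisson–Lie bracket determined on coordinates by {x_{ij}, x_{i'j'}}_B = (1/2)·(△(i'−i) + △(j'−j))·x_{ij'}·x_{i'j}, where △ denotes the sign function. Then the algebra homomorphism φ from this polynomial ring to the rank n swapping ring Z_n(P) defined by φ(x_{ij}) = a_i a_j is injective and is Poisson with respect to {·,·}_B and the swapping bracket on Z_n(P). -/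
noncomputable section

open scoped Classical
open MvPolynomial

set_option maxHeartbeats 1000000
set_option synthInstance.maxHeartbeats 400000

/-- Index type for the coordinates `x_{ij}`, `n < i ≤ m`, `1 ≤ j ≤ n`, of the subspace of
`m × n` matrices whose first `n` rows form the identity matrix. -/
abbrev PLIdx (m n : ℕ) : Type := {ij : ℕ × ℕ // n < ij.1 ∧ ij.1 ≤ m ∧ 1 ≤ ij.2 ∧ ij.2 ≤ n}

/-- The value of the standard Poisson–Lie bracket on two coordinate functions:
`{x_{ij}, x_{i'j'}}_B = (1/2)(△(i'-i) + △(j'-j)) · x_{ij'} · x_{i'j}`. -/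
def genPL (K : Type) [Field K] (m n : ℕ) (g g' : PLIdx m n) : MvPolynomial (PLIdx m n) K :=
  ((((1:ℚ)/2) * (sgnQ ((g'.1.1 : ℝ) - (g.1.1 : ℝ)) + sgnQ ((g'.1.2 : ℝ) - (g.1.2 : ℝ))) : ℚ) : K) •
    (MvPolynomial.X (⟨(g.1.1, g'.1.2), g.2.1, g.2.2.1, g'.2.2.2.1, g'.2.2.2.2⟩ : PLIdx m n)
      * MvPolynomial.X (⟨(g'.1.1, g.1.2), g'.2.1, g'.2.2.1, g.2.2.2.1, g.2.2.2.2⟩ : PLIdx m n))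

/-- The standard Poisson–Lie bracket on the coordinate ring `K[x_{ij}]` of the subspace
`{x_{ij} = δ_{ij} for 1 ≤ i ≤ n}` of `m × n` matrices, extended from the coordinate
functions by the Leibniz rule in each argument. -/
def brPL (K : Type) [Field K] (m n : ℕ) (a b : MvPolynomial (PLIdx m n) K) :
    MvPolynomial (PLIdx m n) K :=
  (MvPolynomial.mkDerivation K
    (fun g : PLIdx m n => (MvPolynomial.mkDerivation K (genPL K m n g)) b)) a

/-- The algebra homomorphism `φ` from the coordinate ring of the matrix subspace to the
rank `n` swapping ring of `P = {a_1, …, a_m}`, defined by `φ(x_{ij}) = a_i a_j`. -/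
def phiPL (K : Type) [Field K] (m n : ℕ) (a : ℕ → Circle1) :
    MvPolynomial (PLIdx m n) K →ₐ[K] ZnRing K (a '' Set.Icc 1 m) n :=
  MvPolynomial.aeval (fun g : PLIdx m n =>
    toZn K (a '' Set.Icc 1 m) n (gen K (a '' Set.Icc 1 m)
      ⟨a g.1.1, ⟨g.1.1, Set.mem_Icc.mpr ⟨by have := g.2.1; omega, g.2.2.1⟩, rfl⟩⟩
      ⟨a g.1.2, ⟨g.1.2, Set.mem_Icc.mpr ⟨g.2.2.2.1,
          by have := g.2.1; have := g.2.2.1; have := g.2.2.2.2; omega⟩, rfl⟩⟩))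

/-!
The order of the points gives `a_i a_j` and `a_{i'} a_{j'}` linking number
`(△(i' - i) + △(j' - j)) / 2` as soon as `j`, `j'` are smaller than `i`, `i'`, so the two brackets
agree on coordinates. Since `x_{ij} ↦ a_i a_j` renames variables, it is Poisson already as a map
into `Z(P)`. These coefficients make sense over every field in which `2` is invertible.

For injectivity, send every variable of `Z(P)` that is not one of the `a_i a_j` with
`j ≤ n < i` to zero. This is a left inverse of the renaming, and it kills `R_n(P)`: in the image of
an `(n+1) × (n+1)` determinant only the columns labelled by `a_1, …, a_n` can be nonzero, so some
column vanishes or two columns coincide.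
-/

section Sign

lemma sgnQ_of_neg {t : ℝ} (ht : t < 0) : sgnQ t = -1 := if_pos ht

lemma sgnQ_of_pos {t : ℝ} (ht : 0 < t) : sgnQ t = 1 := by
  rw [sgnQ, if_neg ht.not_gt, if_neg ht.ne']

lemma sgnQ_sub_comm (s t : ℝ) : sgnQ (s - t) = -sgnQ (t - s) := by
  rcases lt_trichotomy s t with hst | rfl | hts
  · rw [sgnQ_of_neg (sub_neg.2 hst), sgnQ_of_pos (sub_pos.2 hst)]
  · simp [sgnQ]
  · rw [sgnQ_of_pos (sub_pos.2 hts), sgnQ_of_neg (sub_neg.2 hts), neg_neg]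

lemma sgnQ_sub_eq_of_strictMonoOn {α : Type*} [LinearOrder α] {f g : α → ℝ} {s : Set α}
    (hf : StrictMonoOn f s) (hg : StrictMonoOn g s) {i j : α} (hi : i ∈ s) (hj : j ∈ s) :
    sgnQ (f i - f j) = sgnQ (g i - g j) := by
  rcases lt_trichotomy i j with hij | rfl | hji
  · rw [sgnQ_of_neg (sub_neg.2 (hf hi hj hij)), sgnQ_of_neg (sub_neg.2 (hg hi hj hij))]
  · rw [sub_self, sub_self]
  · rw [sgnQ_of_pos (sub_pos.2 (hf hj hi hji)), sgnQ_of_pos (sub_pos.2 (hg hj hi hji))]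

end Sign

section Linking

lemma coordAt_nonneg (o x : Circle1) : 0 ≤ coordAt o x :=
  ((AddCircle.equivIco 1 0) (x - o)).2.1

lemma coordAt_lt_one (o x : Circle1) : coordAt o x < 1 :=
  ((AddCircle.equivIco 1 0) (x - o)).2.2.trans_eq (zero_add 1)

lemma coe_coordAt (o x : Circle1) : (coordAt o x : Circle1) = x - o :=
  AddCircle.coe_equivIco

lemma coordAt_eq_fract (o o' x : Circle1) :
    coordAt o' x = Int.fract (coordAt o x - coordAt o o') := by
  have hdiff : x - o' = ((coordAt o x - coordAt o o' : ℝ) : Circle1) := by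
    rw [AddCircle.coe_sub, coe_coordAt, coe_coordAt, sub_sub_sub_cancel_right]
  rw [coordAt, hdiff, AddCircle.coe_equivIco_mk_apply, div_one, mul_one]

lemma coordAt_of_le {o o' x : Circle1} (h : coordAt o o' ≤ coordAt o x) :
    coordAt o' x = coordAt o x - coordAt o o' := by
  rw [coordAt_eq_fract o, Int.fract_eq_self]
  constructor <;> linarith [coordAt_lt_one o x, coordAt_nonneg o o']

lemma coordAt_of_lt {o o' x : Circle1} (h : coordAt o x < coordAt o o') :
    coordAt o' x = coordAt o x - coordAt o o' + 1 := by
  rw [coordAt_eq_fract o, ← Int.fract_add_one, Int.fract_eq_self]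
  constructor <;> linarith [coordAt_nonneg o x, coordAt_lt_one o o']

/-- The side of the new cut point `o'` on which `x` lies, seen from the old cut point `o`: `1` if
`x` comes after `o'` (or equals it) and `-1` if `x` comes before `o'`. Moving the cut point
multiplies the sign of a difference of coordinates by the sides of the two points. -/
def cutSide (o o' x : Circle1) : ℚ := if coordAt o o' ≤ coordAt o x then 1 else -1

lemma cutSide_sq (o o' x : Circle1) : cutSide o o' x ^ 2 = 1 := by
  unfold cutSide
  split_ifs <;> norm_num

lemma sgnQ_coordAt_sub (o o' x y : Circle1) :
    sgnQ (coordAt o' x - coordAt o' y) =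
      cutSide o o' x * cutSide o o' y * sgnQ (coordAt o x - coordAt o y) := by
  unfold cutSide
  rcases le_or_gt (coordAt o o') (coordAt o x) with hx | hx <;>
    rcases le_or_gt (coordAt o o') (coordAt o y) with hy | hy
  · rw [coordAt_of_le hx, coordAt_of_le hy, if_pos hx, if_pos hy, sub_sub_sub_cancel_right,
      one_mul, one_mul]
  · rw [coordAt_of_le hx, coordAt_of_lt hy, if_pos hx, if_neg hy.not_ge,
      sgnQ_of_neg (by linarith [coordAt_lt_one o x, coordAt_nonneg o y]),
      sgnQ_of_pos (sub_pos.2 (hy.trans_le hx)), one_mul, mul_one]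
  · rw [coordAt_of_lt hx, coordAt_of_le hy, if_neg hx.not_ge, if_pos hy,
      sgnQ_of_pos (by linarith [coordAt_nonneg o x, coordAt_lt_one o y]),
      sgnQ_of_neg (sub_neg.2 (hx.trans_le hy)), mul_one, neg_one_mul, neg_neg]
  · rw [coordAt_of_lt hx, coordAt_of_lt hy, if_neg hx.not_ge, if_neg hy.not_ge,
      add_sub_add_right_eq_sub, sub_sub_sub_cancel_right, neg_one_mul, neg_neg, one_mul]

-- Each point occurs twice in a product of three signs, so the sides cancel.
lemma linkingAt_eq_linkingAt (o o' r x s y : Circle1) :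
    linkingAt o' r x s y = linkingAt o r x s y := by
  have sides_cancel (p q : Circle1) (u v w : ℚ) :
      (cutSide o o' r * cutSide o o' p * u) * (cutSide o o' r * cutSide o o' q * v) *
        (cutSide o o' q * cutSide o o' p * w) = u * v * w := by
    linear_combination
      (cutSide o o' r ^ 2 * cutSide o o' p ^ 2 * cutSide_sq o o' q
        + cutSide o o' r ^ 2 * cutSide_sq o o' p + cutSide_sq o o' r) * (u * v * w)
  simp only [linkingAt, sgnQ_coordAt_sub o o', sides_cancel]

lemma linkQ_eq_linkingAt (o r x s y : Circle1) : linkQ r x s y = linkingAt o r x s y :=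
  linkingAt_eq_linkingAt o _ r x s y

lemma linkQ_eq_of_coordAt_lt {o r x s y : Circle1} (hxr : coordAt o x < coordAt o r)
    (hyr : coordAt o y < coordAt o r) (hxs : coordAt o x < coordAt o s) :
    linkQ r x s y =
      1 / 2 * (sgnQ (coordAt o s - coordAt o r) + sgnQ (coordAt o y - coordAt o x)) := by
  rw [linkQ_eq_linkingAt o, linkingAt, sgnQ_of_pos (sub_pos.2 hxr), sgnQ_of_pos (sub_pos.2 hyr),
    sgnQ_of_pos (sub_pos.2 hxs), sgnQ_sub_comm (coordAt o r) (coordAt o s)]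
  ring

end Linking

section Configuration

lemma strictMonoOn_Icc_of_isChain_map_range {α : Type*} [Preorder α] {f : ℕ → α} {m : ℕ}
    (h : ((List.range m).map fun k => f (k + 1)).IsChain (· < ·)) :
    StrictMonoOn f (Set.Icc 1 m) := by
  intro i hi j hj hij
  obtain ⟨i, rfl⟩ := Nat.exists_eq_add_of_le' hi.1
  obtain ⟨j, rfl⟩ := Nat.exists_eq_add_of_le' hj.1
  have hpair := List.pairwise_iff_getElem.1 (List.isChain_iff_pairwise.1 h) i j
    (by simpa using hi.2) (by simpa using hj.2) (by simpa using hij)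
  simpa using hpair

lemma exists_strictMonoOn_coordAt {m : ℕ} {a : ℕ → Circle1}
    (h : AnticlockwiseList ((List.range m).map fun k => a (k + 1))) :
    ∃ o, StrictMonoOn (coordAt o ∘ a) (Set.Icc 1 m) := by
  obtain ⟨o, -, hchain⟩ := h
  rw [List.map_map] at hchain
  exact ⟨o, strictMonoOn_Icc_of_isChain_map_range hchain⟩

variable {m n : ℕ}

namespace PLIdx

lemma row_mem (g : PLIdx m n) : g.1.1 ∈ Set.Icc 1 m :=
  ⟨Nat.one_le_of_lt g.2.1, g.2.2.1⟩

lemma col_lt_row (g g' : PLIdx m n) : g.1.2 < g'.1.1 :=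
  g.2.2.2.2.trans_lt g'.2.1

lemma col_mem (g : PLIdx m n) : g.1.2 ∈ Set.Icc 1 m :=
  ⟨g.2.2.2.1, (col_lt_row g g).le.trans g.2.2.1⟩

end PLIdx

lemma linkQ_chordPL {a : ℕ → Circle1} {o : Circle1}
    (ha : StrictMonoOn (coordAt o ∘ a) (Set.Icc 1 m)) (g g' : PLIdx m n) :
    linkQ (a g.1.1) (a g.1.2) (a g'.1.1) (a g'.1.2) =
      1 / 2 * (sgnQ ((g'.1.1 : ℝ) - g.1.1) + sgnQ ((g'.1.2 : ℝ) - g.1.2)) := by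
  have col_lt_row (p q : PLIdx m n) : coordAt o (a p.1.2) < coordAt o (a q.1.1) :=
    ha p.col_mem q.row_mem (p.col_lt_row q)
  have sgnQ_index {i j : ℕ} (hi : i ∈ Set.Icc 1 m) (hj : j ∈ Set.Icc 1 m) :
      sgnQ (coordAt o (a i) - coordAt o (a j)) = sgnQ ((i : ℝ) - j) :=
    sgnQ_sub_eq_of_strictMonoOn ha (Nat.strictMono_cast.strictMonoOn _) hi hj
  rw [linkQ_eq_of_coordAt_lt (col_lt_row g g) (col_lt_row g' g) (col_lt_row g g'),
    sgnQ_index g'.row_mem g.row_mem, sgnQ_index g'.col_mem g.col_mem]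

/-- The chord `a_i a_j` belonging to the coordinate `x_{ij}`, as a variable of the swapping ring
of `{a_1, …, a_m}`. -/
def chordPL {a : ℕ → Circle1} (ha : Set.InjOn a (Set.Icc 1 m)) (g : PLIdx m n) :
    SwapIdx (a '' Set.Icc 1 m) :=
  ⟨(⟨a g.1.1, Set.mem_image_of_mem a g.row_mem⟩, ⟨a g.1.2, Set.mem_image_of_mem a g.col_mem⟩),
    fun h => (g.col_lt_row g).ne' (ha g.row_mem g.col_mem (congrArg Subtype.val h))⟩

lemma chordPL_injective {a : ℕ → Circle1} (ha : Set.InjOn a (Set.Icc 1 m)) :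
    Function.Injective (chordPL (n := n) ha) := by
  intro g g' h
  have hrow : a g.1.1 = a g'.1.1 := congrArg (fun q => q.1.1.1) h
  have hcol : a g.1.2 = a g'.1.2 := congrArg (fun q => q.1.2.1) h
  exact Subtype.ext (Prod.ext (ha g.row_mem g'.row_mem hrow) (ha g.col_mem g'.col_mem hcol))

end Configuration

section Poisson

lemma gen_of_ne (K : Type) [Field K] {P : Set Circle1} {x y : P} (h : x ≠ y) :
    gen K P x y = X (⟨(x, y), h⟩ : SwapIdx P) := dif_pos h

lemma rename_mkDerivation {R σ τ : Type*} [CommSemiring R] {e : σ → τ}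
    {d : σ → MvPolynomial σ R} {d' : τ → MvPolynomial τ R}
    (h : ∀ i, rename e (d i) = d' (e i)) (f : MvPolynomial σ R) :
    rename e (mkDerivation R d f) = mkDerivation R d' (rename e f) := by
  induction f using MvPolynomial.induction_on with
  | C r => simp only [rename_C, derivation_C, map_zero]
  | add p q hp hq => simp only [map_add, hp, hq]
  | mul_X p i hp =>
    simp only [Derivation.leibniz, smul_eq_mul, map_add, map_mul, rename_X, mkDerivation_X, hp, h]

lemma rename_mkDerivation_mkDerivation {R σ τ : Type*} [CommSemiring R] {e : σ → τ}
    {β : σ → σ → MvPolynomial σ R} {β' : τ → τ → MvPolynomial τ R}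
    (h : ∀ i j, rename e (β i j) = β' (e i) (e j)) (f g : MvPolynomial σ R) :
    rename e (mkDerivation R (fun i => mkDerivation R (β i) g) f) =
      mkDerivation R (fun k => mkDerivation R (β' k) (rename e g)) (rename e f) :=
  rename_mkDerivation (fun i => rename_mkDerivation (h i) g) f

variable (K : Type) [Field K] {m n : ℕ} {a : ℕ → Circle1} {o : Circle1}

lemma gen_chordPL (ha : Set.InjOn a (Set.Icc 1 m)) (g : PLIdx m n) :
    gen K _ (chordPL ha g).1.1 (chordPL ha g).1.2 = X (chordPL ha g) :=
  gen_of_ne K (chordPL ha g).2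

lemma rename_chordPL_genPL (ha : StrictMonoOn (coordAt o ∘ a) (Set.Icc 1 m))
    (g g' : PLIdx m n) :
    rename (chordPL ha.injOn.of_comp) (genPL K m n g g') =
      genBr K (a '' Set.Icc 1 m) 1 0 (chordPL ha.injOn.of_comp g)
        (chordPL ha.injOn.of_comp g') := by
  rw [genPL, ← linkQ_chordPL ha, map_smul, map_mul, rename_X, rename_X, ← gen_chordPL,
    ← gen_chordPL, genBr, one_smul, zero_smul, add_zero]
  rfl

lemma rename_chordPL_brPL (ha : StrictMonoOn (coordAt o ∘ a) (Set.Icc 1 m))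
    (f g : MvPolynomial (PLIdx m n) K) :
    rename (chordPL ha.injOn.of_comp) (brPL K m n f g) =
      swapBr K (a '' Set.Icc 1 m) 1 0 (rename (chordPL ha.injOn.of_comp) f)
        (rename (chordPL ha.injOn.of_comp) g) :=
  rename_mkDerivation_mkDerivation (rename_chordPL_genPL K ha) f g

end Poisson

section Injectivity

lemma det_of_eq_zero_of_card_lt {R α β ι : Type*} [CommRing R] [Fintype ι] [DecidableEq ι]
    {F : α → β → R} {s : Finset β} (hF : ∀ x, ∀ y ∉ s, F x y = 0) (hs : s.card < Fintype.card ι)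
    (xs : ι → α) (ys : ι → β) : (Matrix.of fun i j => F (xs i) (ys j)).det = 0 := by
  by_cases hys : ∀ j, ys j ∈ s
  · obtain ⟨j, -, k, -, hjk, hcol⟩ := Finset.exists_ne_map_eq_of_card_lt_of_maps_to
      (s := Finset.univ) (t := s) (f := ys) hs (fun j _ => hys j)
    exact Matrix.det_zero_of_column_eq hjk fun i => congrArg (F (xs i)) hcol
  · obtain ⟨j, hj⟩ := not_forall.1 hys
    exact Matrix.det_eq_zero_of_column_eq_zero j fun i => hF (xs i) (ys j) hj

variable (K : Type) [Field K] {m n : ℕ} {a : ℕ → Circle1}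

/-- The algebra map `Z(P) → K[x_{ij}]` that sends the chord `a_i a_j` with `j ≤ n < i` to `x_{ij}`
and every other chord to zero; it is a left inverse of `x_{ij} ↦ a_i a_j`. -/
def chordProjection (n : ℕ) (ha : Set.InjOn a (Set.Icc 1 m)) :
    SwapRing K (a '' Set.Icc 1 m) →ₐ[K] MvPolynomial (PLIdx m n) K :=
  killCompl (chordPL_injective ha)

lemma chordProjection_gen_eq_zero (ha : Set.InjOn a (Set.Icc 1 m)) {x y : a '' Set.Icc 1 m}
    (hy : (y : Circle1) ∉ a '' Set.Icc 1 n) :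
    chordProjection K n ha (gen K _ x y) = 0 := by
  by_cases hxy : x = y
  · rw [gen, dif_neg (not_not.2 hxy), map_zero]
  · have hrange : (⟨(x, y), hxy⟩ : SwapIdx _) ∉ Set.range (chordPL (n := n) ha) := by
      rintro ⟨g, hg⟩
      exact hy ⟨g.1.2, g.2.2.2, congrArg (fun q => q.1.2.1) hg⟩
    rw [gen_of_ne K hxy, chordProjection, killCompl, aeval_X, dif_neg hrange]

lemma chordProjection_Dmat (ha : Set.InjOn a (Set.Icc 1 m))
    (xs ys : Fin (n + 1) → a '' Set.Icc 1 m) :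
    chordProjection K n ha (Dmat K _ (n + 1) xs ys) = 0 := by
  let s : Finset (a '' Set.Icc 1 m) := ((Finset.Icc 1 n).image a).subtype _
  have hcard : s.card < Fintype.card (Fin (n + 1)) := by
    calc s.card ≤ ((Finset.Icc 1 n).image a).card := by
          rw [Finset.card_subtype]; exact Finset.card_filter_le _ _
      _ ≤ (Finset.Icc 1 n).card := Finset.card_image_le
      _ < Fintype.card (Fin (n + 1)) := by simp
  rw [Dmat, AlgHom.map_det]
  refine det_of_eq_zero_of_card_lt (s := s)
    (F := fun x y => chordProjection K n ha (gen K _ x y))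
    (fun x y hy => chordProjection_gen_eq_zero K ha ?_) hcard xs ys
  simpa [s] using hy

lemma Rideal_le_ker_chordProjection (ha : Set.InjOn a (Set.Icc 1 m)) :
    Rideal K (a '' Set.Icc 1 m) n ≤ RingHom.ker (chordProjection K n ha) := by
  rw [Rideal, Ideal.span_le]
  rintro _ ⟨xs, ys, rfl⟩
  exact chordProjection_Dmat K ha xs ys

lemma phiPL_eq_toZn_rename (ha : Set.InjOn a (Set.Icc 1 m)) (f : MvPolynomial (PLIdx m n) K) :
    phiPL K m n a f = toZn K (a '' Set.Icc 1 m) n (rename (chordPL ha) f) := by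
  suffices h : phiPL K m n a =
      (Ideal.Quotient.mkₐ K (Rideal K (a '' Set.Icc 1 m) n)).comp (rename (chordPL ha)) from
    DFunLike.congr_fun h f
  refine algHom_ext fun g => ?_
  rw [phiPL, aeval_X, AlgHom.comp_apply, rename_X, ← gen_chordPL]
  rfl

theorem phiPL_injective (ha : Set.InjOn a (Set.Icc 1 m)) :
    Function.Injective (phiPL K m n a) := by
  rw [injective_iff_map_eq_zero]
  intro f hf
  rw [phiPL_eq_toZn_rename K ha, toZn, Ideal.Quotient.eq_zero_iff_mem] at hf
  have hkill := Rideal_le_ker_chordProjection K ha hf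
  rwa [RingHom.mem_ker, chordProjection, killCompl_rename_app] at hkill

end Injectivity

theorem poisson_lie_to_swapping_general (K : Type) [Field K] [NeZero (2 : K)] (m n : ℕ)
    (a : ℕ → Circle1) (hcfg : AnticlockwiseList ((List.range m).map (fun k => a (k + 1)))) :
    Function.Injective (phiPL K m n a) ∧
    ∀ B : ZnRing K (a '' Set.Icc 1 m) n → ZnRing K (a '' Set.Icc 1 m) n →
          ZnRing K (a '' Set.Icc 1 m) n,
      (∀ f g : SwapRing K (a '' Set.Icc 1 m),
        B (toZn K (a '' Set.Icc 1 m) n f) (toZn K (a '' Set.Icc 1 m) n g)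
          = toZn K (a '' Set.Icc 1 m) n (swapBr K (a '' Set.Icc 1 m) 1 0 f g)) →
      ∀ f g : MvPolynomial (PLIdx m n) K,
        phiPL K m n a (brPL K m n f g) = B (phiPL K m n a f) (phiPL K m n a g) := by
  obtain ⟨o, ho⟩ := exists_strictMonoOn_coordAt hcfg
  have ha : Set.InjOn a (Set.Icc 1 m) := ho.injOn.of_comp
  refine ⟨phiPL_injective K ha, fun B hB f g => ?_⟩
  simp only [phiPL_eq_toZn_rename K ha, hB, rename_chordPL_brPL K ho]

/-- For `m > n ≥ 2` and `P = {a_1, …, a_m}` ordered anticlockwise on a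
circle, the homomorphism `φ : K[x_{ij} : n < i ≤ m, 1 ≤ j ≤ n] → Z_n(P)` with
`φ(x_{ij}) = a_i a_j` is injective and Poisson with respect to the standard Poisson–Lie
bracket and the swapping bracket (i.e. the bracket induced on `Z_n(P)` by the swapping
bracket of `Z(P)`). -/
theorem poisson_lie_to_swapping (K : Type) [Field K] [CharZero K]
    (m n : ℕ) (hn : 2 ≤ n) (hm : n < m) (a : ℕ → Circle1)
    (hcfg : AnticlockwiseList ((List.range m).map (fun k => a (k+1)))) :
    Function.Injective (phiPL K m n a) ∧
    ∀ B : ZnRing K (a '' Set.Icc 1 m) n → ZnRing K (a '' Set.Icc 1 m) n →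
          ZnRing K (a '' Set.Icc 1 m) n,
      (∀ f g : SwapRing K (a '' Set.Icc 1 m),
        B (toZn K (a '' Set.Icc 1 m) n f) (toZn K (a '' Set.Icc 1 m) n g)
          = toZn K (a '' Set.Icc 1 m) n (swapBr K (a '' Set.Icc 1 m) 1 0 f g)) →
      ∀ f g : MvPolynomial (PLIdx m n) K,
        phiPL K m n a (brPL K m n f g) = B (phiPL K m n a f) (phiPL K m n a g) := by
  exact poisson_lie_to_swapping_general K m n a hcfg

end
end
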